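/- Let a_n : X → ℝ and b_n : X → ℝ (n ≥ 0) be two sequences of continuous functions such that for every x ∈ X and n, k ≥ 0: a_{n+k}(x) ≤ a_n(T^k x) + a_k(x), b_{n+k}(x) ≤ b_n(T^k x) + b_k(x), and a_n(x) ≤ a_{n+k}(x) + b_k(T^n x). If lim_{n→∞} (1/n)·∫ a_n dμ < 0 for every observable measure μ ∈ O, then there exist λ > 0 and K ∈ ℕ such that for Leb-a.e. x, limsup_{n→∞} (1/(nK))·Σ_{i=0}^{n-1} a_K(T^{iK} x) ≤ −λ < 0. -/

import Mathlib

open MeasureTheory Filter Topology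
open scoped ENNReal

/-- The empirical probability measure `γ_{n+1,x} = (1/(n+1)) ∑_{j≤n} δ_{T^j x}` of the orbit
of `x` (indexed so that it is a probability measure for every index). -/
noncomputable def empiricalPM {X : Type*} [MeasurableSpace X] (T : X → X) (x : X) (n : ℕ) :
    MeasureTheory.ProbabilityMeasure X :=
  ⟨(n + 1 : ℝ≥0∞)⁻¹ • ∑ j ∈ Finset.range (n + 1), MeasureTheory.Measure.dirac (T^[j] x), by
    constructor
    rw [Measure.smul_apply, Measure.finset_sum_apply]
    simp
    rw [ENNReal.inv_mul_cancel] <;> simp⟩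

/-- The set `V(x)` of weak* limit points of the sequence of empirical measures of `x`. -/
def limitSet {X : Type*} [MeasurableSpace X] [TopologicalSpace X] [OpensMeasurableSpace X]
    (T : X → X) (x : X) : Set (MeasureTheory.ProbabilityMeasure X) :=
  {μ | ∃ φ : ℕ → ℕ, StrictMono φ ∧ Tendsto (fun j => empiricalPM T x (φ j)) atTop (𝓝 μ)}

/-- `μ` is an observable (physical-like) measure for `(X, T, Leb)`: every weak* neighbourhood
`U` of `μ` (equivalently, every ε-ball around `μ` in a compatible metric) is intersected by
`V(x)` for a positive `Leb`-measure set of points `x`. -/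
def IsObservable {X : Type*} [MeasurableSpace X] [TopologicalSpace X] [OpensMeasurableSpace X]
    (Leb : MeasureTheory.Measure X) (T : X → X) (μ : MeasureTheory.ProbabilityMeasure X) : Prop :=
  ∀ U : Set (MeasureTheory.ProbabilityMeasure X), IsOpen U → μ ∈ U →
    0 < Leb {x | (limitSet T x ∩ U).Nonempty}

/-- The Lyapunov exponent `χ(μ, Φ) = lim_n (1/n) ∫ log φ_n dμ` of a potential
`Φ = {log φ_n}` (for invariant `μ` the limit exists by subadditivity, so it equals the
`liminf` used here); it takes values in `[-∞, ∞)`, i.e. in `EReal`. -/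
noncomputable def lyapExp {X : Type*} [MeasurableSpace X] (φ : ℕ → X → ℝ)
    (μ : MeasureTheory.Measure X) : EReal :=
  liminf (fun n : ℕ => (((n : ℝ)⁻¹ * ∫ x, Real.log (φ n x) ∂μ : ℝ) : EReal)) atTop

/-!
For `Leb`-almost every `x` all limit points of the empirical measures are observable. Observable
measures form a compact set and are invariant, so `n ↦ ∫ a n ∂μ` is subadditive for each of them:
a value that is negative at one index stays negative at all its multiples. Compactness then gives
one `L` and `c > 0` with `∫ a L ∂μ < -c` for every observable `μ`, whence the Birkhoff averages of
`a L` are eventually below `-c` almost everywhere.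

To pass from `a L` to `a K` with `K` large, sum `a (L + j) ≤ a L ∘ T^[j] + a j` over `j`. The
telescoping sum shows that `L * a K` exceeds the Birkhoff sum of `a L` of length `K` by at most a
constant independent of `K`, which is negligible after division by `K`.
-/

open TopologicalSpace

section Averages

lemma abs_inv_mul_sum_range_le {v : ℕ → ℝ} {B : ℝ} (hv : ∀ i, |v i| ≤ B) (n : ℕ) :
    |(n : ℝ)⁻¹ * ∑ i ∈ Finset.range n, v i| ≤ B := by
  have hsum : |∑ i ∈ Finset.range n, v i| ≤ n * B := by
    simpa using (Finset.abs_sum_le_sum_abs v (Finset.range n)).trans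
      (Finset.sum_le_card_nsmul _ _ B fun i _ => hv i)
  have hB : 0 ≤ B := (abs_nonneg _).trans (hv 0)
  calc |(n : ℝ)⁻¹ * ∑ i ∈ Finset.range n, v i|
      = (n : ℝ)⁻¹ * |∑ i ∈ Finset.range n, v i| := by rw [abs_mul, abs_of_nonneg (by positivity)]
    _ ≤ (n : ℝ)⁻¹ * (n * B) := by gcongr
    _ = (n : ℝ)⁻¹ * n * B := (mul_assoc ..).symm
    _ ≤ B := mul_le_of_le_one_left hB inv_mul_le_one

lemma limsup_inv_mul_sum_range_le {v : ℕ → ℝ} {B c : ℝ} (hv : ∀ i, |v i| ≤ B) (s : ℝ)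
    (h : ∀ᶠ n : ℕ in atTop, ((n : ℝ) * s)⁻¹ * ∑ i ∈ Finset.range n, v i ≤ c) :
    limsup (fun n : ℕ => ((n : ℝ) * s)⁻¹ * ∑ i ∈ Finset.range n, v i) atTop ≤ c := by
  have hbdd (n : ℕ) : |((n : ℝ) * s)⁻¹ * ∑ i ∈ Finset.range n, v i| ≤ |s⁻¹| * B := by
    rw [mul_inv_rev, mul_assoc, abs_mul]
    gcongr
    exact abs_inv_mul_sum_range_le hv n
  exact limsup_le_of_le
    (isBoundedUnder_of ⟨_, fun n => (abs_le.1 (hbdd n)).1⟩).isCoboundedUnder_le h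

lemma exists_pos_neg_of_liminf_inv_mul_neg {u : ℕ → ℝ}
    (h : liminf (fun n : ℕ => (((n : ℝ)⁻¹ * u n : ℝ) : EReal)) atTop < 0) :
    ∃ n, 0 < n ∧ u n < 0 := by
  obtain ⟨n, hlt, hn⟩ := ((frequently_lt_of_liminf_lt (by isBoundedDefault) h).and_eventually
    (eventually_gt_atTop 0)).exists
  have hlt' : (n : ℝ)⁻¹ * u n < 0 := by exact_mod_cast hlt
  exact ⟨n, hn, (pos_iff_neg_of_mul_neg hlt').1 (by positivity)⟩

lemma sum_range_shift_sub_comm {G : Type*} [AddCommGroup G] (f : ℕ → G) (L n : ℕ) :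
    ∑ j ∈ Finset.range n, (f (L + j) - f j) = ∑ i ∈ Finset.range L, (f (n + i) - f i) := by
  rw [Finset.sum_sub_distrib, Finset.sum_sub_distrib, ← Finset.sum_range_add_sub_sum_range f L n,
    ← Finset.sum_range_add_sub_sum_range f n L, add_comm L n, sub_right_comm]

lemma exists_forall_norm_le_of_continuous {ι X E : Type*} [TopologicalSpace X] [CompactSpace X]
    [SeminormedAddGroup E] {f : ι → X → E} (hf : ∀ i, Continuous (f i)) (s : Finset ι) :
    ∃ C : ℝ, ∀ i ∈ s, ∀ x, ‖f i x‖ ≤ C := by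
  choose B hB using fun i => isCompact_univ.exists_bound_of_continuousOn (hf i).continuousOn
  obtain ⟨C, hC⟩ := (s.image B).exists_le
  exact ⟨C, fun i hi x => (hB i x trivial).trans (hC _ (Finset.mem_image_of_mem B hi))⟩

end Averages

section Subadditive

lemma neg_of_subadditive_of_dvd {u : ℕ → ℝ} (hu : Subadditive u) {m n : ℕ} (hmn : m ∣ n)
    (hn : 0 < n) (hm : u m < 0) : u n < 0 := by
  obtain ⟨k, rfl⟩ := hmn
  obtain ⟨k, rfl⟩ := Nat.exists_eq_succ_of_ne_zero (Nat.pos_of_mul_pos_left hn).ne'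
  calc u (m * (k + 1)) = u (k * m + m) := by ring_nf
    _ ≤ k * u m + u m := hu.apply_mul_add_le k m m
    _ < 0 := add_neg_of_nonpos_of_neg (mul_nonpos_of_nonneg_of_nonpos k.cast_nonneg hm.le) hm

-- A negative value of a subadditive sequence persists at all multiples of its index, so the
-- product of the finitely many indices provided by compactness works everywhere on `s`.
lemma exists_pos_forall_neg_of_subadditive {Y : Type*} [TopologicalSpace Y] {s : Set Y}
    (hs : IsCompact s) {u : ℕ → Y → ℝ} (hu : ∀ n, UpperSemicontinuous (u n))
    (hsub : ∀ y ∈ s, Subadditive fun n => u n y) (hneg : ∀ y ∈ s, ∃ n, 0 < n ∧ u n y < 0) :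
    ∃ n, 0 < n ∧ ∀ y ∈ s, u n y < 0 := by
  obtain ⟨t, ht⟩ := hs.elim_finite_subcover (fun n : {n : ℕ // 0 < n} => u n ⁻¹' Set.Iio 0)
    (fun n => (hu n).isOpen_preimage 0) fun y hy => by
      obtain ⟨n, hn, hlt⟩ := hneg y hy
      exact Set.mem_iUnion.2 ⟨⟨n, hn⟩, hlt⟩
  have hpos : 0 < ∏ n ∈ t, (n : ℕ) := Finset.prod_pos fun n _ => n.2
  refine ⟨∏ n ∈ t, (n : ℕ), hpos, fun y hy => ?_⟩
  obtain ⟨n, hnt, hlt⟩ := Set.mem_iUnion₂.1 (ht hy)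
  exact neg_of_subadditive_of_dvd (hsub y hy) (Finset.dvd_prod_of_mem _ hnt) hpos hlt

lemma exists_pos_forall_lt_neg_of_isCompact {Y : Type*} [TopologicalSpace Y] {s : Set Y}
    (hs : IsCompact s) {f : Y → ℝ} (hf : UpperSemicontinuousOn f s) (hneg : ∀ y ∈ s, f y < 0) :
    ∃ c, 0 < c ∧ ∀ y ∈ s, f y < -c := by
  obtain rfl | hne := s.eq_empty_or_nonempty
  · exact ⟨1, one_pos, by simp⟩
  obtain ⟨y₀, hy₀, hmax⟩ := hf.exists_isMaxOn hne hs
  obtain ⟨c, hlt, hc⟩ := exists_between (hneg y₀ hy₀)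
  exact ⟨-c, neg_pos.2 hc, fun y hy => by simpa using (hmax hy).trans_lt hlt⟩

end Subadditive

section Cocycles

variable {X : Type*} {T : X → X} {a : ℕ → X → ℝ}

/-- A sequence of functions that is subadditive along the orbits of `T`, such as
`a n x = log ‖D(T^n) x‖`. -/
def IsSubadditiveCocycle (T : X → X) (a : ℕ → X → ℝ) : Prop :=
  ∀ n k x, a (n + k) x ≤ a n (T^[k] x) + a k x

lemma IsSubadditiveCocycle.subadditive_integral [MeasurableSpace X] {μ : Measure X}
    (ha : IsSubadditiveCocycle T a) (hT : MeasurePreserving T μ μ)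
    (hint : ∀ n, Integrable (a n) μ) : Subadditive fun n => ∫ x, a n x ∂μ := by
  intro n k
  have hTk : MeasurePreserving T^[k] μ μ := hT.iterate k
  have hcomp : Integrable (fun x => a n (T^[k] x)) μ := hTk.integrable_comp_of_integrable (hint n)
  calc ∫ x, a (n + k) x ∂μ ≤ ∫ x, (a n (T^[k] x) + a k x) ∂μ :=
        integral_mono (hint _) (hcomp.add (hint k)) (ha n k)
    _ = ∫ x, a n (T^[k] x) ∂μ + ∫ x, a k x ∂μ := integral_add hcomp (hint k)
    _ = ∫ x, a n x ∂μ + ∫ x, a k x ∂μ := by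
        rw [← integral_map hTk.aemeasurable (hTk.map_eq.symm ▸ (hint n).aestronglyMeasurable),
          hTk.map_eq]

-- Sum `a (L + j) x - a j x ≤ a L (T^[j] x)` over `j`: the left side telescopes.
lemma IsSubadditiveCocycle.sum_sub_le_birkhoffSum (ha : IsSubadditiveCocycle T a) (L n : ℕ)
    (x : X) : ∑ i ∈ Finset.range L, (a (n + i) x - a i x) ≤ birkhoffSum T (a L) n x := by
  rw [← sum_range_shift_sub_comm fun i => a i x]
  exact Finset.sum_le_sum fun j _ => sub_le_iff_le_add.2 (ha L j x)

lemma IsSubadditiveCocycle.mul_le_birkhoffSum_add (ha : IsSubadditiveCocycle T a) {L : ℕ} {A : ℝ}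
    (hA : ∀ i ≤ L, ∀ x, |a i x| ≤ A) (n : ℕ) (x : X) :
    L * a (n + L) x ≤ birkhoffSum T (a L) (n + L) x + L * (3 * A) := by
  have hterm : ∀ i ∈ Finset.range L, a (n + L) x - 2 * A ≤ a (n + i) x - a i x := by
    intro i hi
    have hiL : i ≤ L := (Finset.mem_range.1 hi).le
    have hsub : a (n + L) x ≤ a (L - i) (T^[n + i] x) + a (n + i) x := by
      simpa [show L - i + (n + i) = n + L by omega] using ha (L - i) (n + i) x
    linarith [(abs_le.1 (hA (L - i) (L.sub_le i) (T^[n + i] x))).2, (abs_le.1 (hA i hiL x)).2]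
  have hsum : L * (a (n + L) x - 2 * A) ≤ birkhoffSum T (a L) n x := by
    simpa using (Finset.card_nsmul_le_sum _ _ _ hterm).trans (ha.sum_sub_le_birkhoffSum L n x)
  have htail : L * (-A) ≤ birkhoffSum T (a L) L (T^[n] x) := by
    simpa [birkhoffSum] using Finset.card_nsmul_le_sum (Finset.range L)
      (fun j => a L (T^[j] (T^[n] x))) (-A) fun j _ => (abs_le.1 (hA L le_rfl _)).1
  rw [birkhoffSum_add]
  linarith

lemma sum_birkhoffSum_iterate_mul {M : Type*} [AddCommMonoid M] (T : X → X) (f : X → M)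
    (K n : ℕ) (x : X) :
    ∑ i ∈ Finset.range n, birkhoffSum T f K (T^[i * K] x) = birkhoffSum T f (n * K) x := by
  induction n with
  | zero => simp
  | succ n ih => rw [Finset.sum_range_succ, ih, Nat.succ_mul, birkhoffSum_add]

lemma inv_mul_sum_iterate_mul_le {f g : X → ℝ} {K L : ℕ} {C : ℝ} (hK : 0 < K) (hL : 0 < L)
    (h : ∀ x, L * g x ≤ birkhoffSum T f K x + C) {n : ℕ} (hn : 0 < n) (x : X) :
    ((n : ℝ) * K)⁻¹ * ∑ i ∈ Finset.range n, g (T^[i * K] x) ≤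
      (birkhoffAverage ℝ T f (n * K) x + C / K) / L := by
  have hsum : L * ∑ i ∈ Finset.range n, g (T^[i * K] x) ≤
      birkhoffSum T f (n * K) x + n * C := by
    rw [Finset.mul_sum, ← sum_birkhoffSum_iterate_mul]
    simpa [Finset.sum_add_distrib] using
      Finset.sum_le_sum fun i (_ : i ∈ Finset.range n) => h (T^[i * K] x)
  calc ((n : ℝ) * K)⁻¹ * ∑ i ∈ Finset.range n, g (T^[i * K] x)
      = ((n : ℝ) * K)⁻¹ * (L * ∑ i ∈ Finset.range n, g (T^[i * K] x)) / L := by field_simp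
    _ ≤ ((n : ℝ) * K)⁻¹ * (birkhoffSum T f (n * K) x + n * C) / L := by gcongr
    _ = (birkhoffAverage ℝ T f (n * K) x + C / K) / L := by
        rw [birkhoffAverage, smul_eq_mul, Nat.cast_mul]
        field_simp

lemma IsSubadditiveCocycle.exists_pos_forall_eventually_le (ha : IsSubadditiveCocycle T a)
    {L : ℕ} (hL : 0 < L) {A : ℝ} (hA : ∀ i ≤ L, ∀ x, |a i x| ≤ A) {c : ℝ} (hc : 0 < c) :
    ∃ K : ℕ, 0 < K ∧ ∀ x, (∀ᶠ n in atTop, birkhoffAverage ℝ T (a L) n x < -c) →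
      ∀ᶠ n : ℕ in atTop,
        ((n : ℝ) * K)⁻¹ * ∑ i ∈ Finset.range n, a K (T^[i * K] x) ≤ -(c / (2 * L)) := by
  obtain ⟨K, herror, hLK⟩ : ∃ K : ℕ, L * (3 * A) / K < c / 2 ∧ L ≤ K :=
    (((tendsto_const_div_atTop_nhds_zero_nat _).eventually_lt_const (half_pos hc)).and
      (eventually_ge_atTop L)).exists
  have hK : 0 < K := hL.trans_le hLK
  refine ⟨K, hK, fun x hx => ?_⟩
  have hcompare (y : X) : L * a K y ≤ birkhoffSum T (a L) K y + L * (3 * A) := by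
    simpa [Nat.sub_add_cancel hLK] using ha.mul_le_birkhoffSum_add hA (K - L) y
  filter_upwards [(tendsto_id.atTop_mul_const' hK).eventually hx, eventually_gt_atTop 0]
    with n havg hn
  calc ((n : ℝ) * K)⁻¹ * ∑ i ∈ Finset.range n, a K (T^[i * K] x)
      ≤ (birkhoffAverage ℝ T (a L) (n * K) x + L * (3 * A) / K) / L :=
        inv_mul_sum_iterate_mul_le hK hL hcompare hn x
    _ ≤ (-c + c / 2) / L := by gcongr; exact havg.le
    _ = -(c / (2 * L)) := by ring

end Cocycles

section EmpiricalMeasures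

variable {X : Type*} [MeasurableSpace X] {T : X → X} {x : X}

lemma integral_empiricalPM {E : Type*} [NormedAddCommGroup E] [NormedSpace ℝ E] [CompleteSpace E]
    {f : X → E} (hf : StronglyMeasurable f) (T : X → X) (x : X) (n : ℕ) :
    ∫ y, f y ∂(empiricalPM T x n : Measure X) = birkhoffAverage ℝ T f (n + 1) x := by
  change ∫ y, f y ∂((n + 1 : ℝ≥0∞)⁻¹ •
    ∑ j ∈ Finset.range (n + 1), Measure.dirac (T^[j] x)) = _
  rw [integral_smul_measure, integral_finsetSum_measure
    fun _ _ => integrable_dirac' hf enorm_lt_top]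
  simp only [integral_dirac' _ _ hf, birkhoffAverage, birkhoffSum]
  congr 1
  rw [ENNReal.toReal_inv]
  norm_cast

variable [TopologicalSpace X]

lemma measurePreserving_of_mem_limitSet [BorelSpace X] [HasOuterApproxClosed X]
    (hT : Continuous T) {μ : ProbabilityMeasure X} (hμ : μ ∈ limitSet T x) :
    MeasurePreserving T (μ : Measure X) μ := by
  obtain ⟨φ, hφ, hlim⟩ := hμ
  have : IsProbabilityMeasure ((μ : Measure X).map T) :=
    Measure.isProbabilityMeasure_map hT.aemeasurable
  refine ⟨hT.measurable, ext_of_forall_integral_eq_of_IsFiniteMeasure fun f => ?_⟩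
  rw [integral_map hT.aemeasurable f.continuous.aestronglyMeasurable]
  have hintegral := ProbabilityMeasure.tendsto_iff_forall_integral_tendsto.1 hlim
  have hdiff : Tendsto (fun j => birkhoffAverage ℝ T f (φ j + 1) (T x) -
      birkhoffAverage ℝ T f (φ j + 1) x) atTop (𝓝 0) :=
    (tendsto_birkhoffAverage_apply_sub_birkhoffAverage' ℝ f.isBounded_range T x).comp
      ((tendsto_add_atTop_nat 1).comp hφ.tendsto_atTop)
  have hshift (n : ℕ) : birkhoffAverage ℝ T (f ∘ T) n x = birkhoffAverage ℝ T f n (T x) := by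
    simp only [birkhoffAverage, birkhoffSum, Function.comp_apply,
      ← Function.iterate_succ_apply' T, ← Function.iterate_succ_apply T]
  refine sub_eq_zero.1 (tendsto_nhds_unique ?_ hdiff)
  refine ((hintegral (f.compContinuous ⟨T, hT⟩)).sub (hintegral f)).congr fun j => ?_
  rw [integral_empiricalPM f.continuous.stronglyMeasurable, ← hshift,
    integral_empiricalPM (f.compContinuous ⟨T, hT⟩).continuous.stronglyMeasurable]
  rfl

lemma eventually_birkhoffAverage_lt_of_forall_mem_limitSet [CompactSpace X] [MetrizableSpace X]
    [BorelSpace X] {f : X → ℝ} (hf : Continuous f) {c : ℝ}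
    (h : ∀ μ ∈ limitSet T x, ∫ y, f y ∂(μ : Measure X) < c) :
    ∀ᶠ n in atTop, birkhoffAverage ℝ T f n x < c := by
  suffices hs : ∀ᶠ n : ℕ in atTop, birkhoffAverage ℝ T f (n + 1) x < c by
    rwa [← map_add_atTop_eq_nat 1, eventually_map]
  by_contra hfreq
  obtain ⟨φ, hφ, hle⟩ := extraction_of_frequently_atTop (not_eventually.1 hfreq)
  obtain ⟨μ, ψ, hψ, hlim⟩ := CompactSpace.tendsto_subseq fun n => empiricalPM T x (φ n)
  have hintegral := ((ProbabilityMeasure.continuous_integral_continuousMap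
    (⟨f, hf⟩ : C(X, ℝ))).tendsto μ).comp hlim
  refine (h μ ⟨φ ∘ ψ, hφ.comp hψ, hlim⟩).not_ge (ge_of_tendsto' hintegral fun n => ?_)
  simpa [integral_empiricalPM hf.stronglyMeasurable] using hle (ψ n)

end EmpiricalMeasures

section Observable

variable {X : Type*} [MeasurableSpace X] [TopologicalSpace X] {Leb : Measure X} {T : X → X}

section

variable [OpensMeasurableSpace X]

lemma isClosed_setOfPred_isObservable (Leb : Measure X) (T : X → X) :
    IsClosed {μ : ProbabilityMeasure X | IsObservable Leb T μ} := by
  refine isOpen_compl_iff.1 (isOpen_iff_forall_mem_open.2 fun μ hμ => ?_)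
  simp only [Set.mem_compl_iff, Set.mem_ofPred_eq, IsObservable, not_forall] at hμ
  obtain ⟨U, hU, hμU, hnull⟩ := hμ
  exact ⟨U, fun ν hν hobs => hnull (hobs U hU hν), hU, hμU⟩

lemma ae_limitSet_subset_setOfPred_isObservable [HereditarilyLindelofSpace (ProbabilityMeasure X)]
    (Leb : Measure X) (T : X → X) :
    ∀ᵐ x ∂Leb, limitSet T x ⊆ {μ | IsObservable Leb T μ} := by
  suffices h : ∀ᵐ x ∂Leb, ∀ μ ∈ {μ | ¬ IsObservable Leb T μ}, μ ∉ limitSet T x by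
    filter_upwards [h] with x hx μ hμ
    exact not_not.1 fun hobs => hx μ hobs hμ
  refine (HereditarilyLindelofSpace.isLindelof _).induction_on
    (p := fun s => ∀ᵐ x ∂Leb, ∀ μ ∈ s, μ ∉ limitSet T x) ?mono ?countable_union ?nhds
  case mono => exact fun s t hst ht => ht.mono fun x hx μ hμ => hx μ (hst hμ)
  case countable_union =>
    intro S hS h
    filter_upwards [(ae_ball_iff hS).2 h] with x hx μ ⟨s, hs, hμ⟩
    exact hx s hs μ hμ
  case nhds =>
    intro μ hμ
    simp only [Set.mem_ofPred_eq, IsObservable, not_forall, not_lt, nonpos_iff_eq_zero] at hμ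
    obtain ⟨U, hU, hμU, hnull⟩ := hμ
    refine ⟨U, mem_nhdsWithin_of_mem_nhds (hU.mem_nhds hμU), ?_⟩
    filter_upwards [measure_eq_zero_iff_ae_notMem.1 hnull] with x hx ν hνU hν
    exact hx ⟨ν, hν, hνU⟩

lemma IsObservable.mem_closure_iUnion_limitSet {μ : ProbabilityMeasure X}
    (hμ : IsObservable Leb T μ) : μ ∈ closure (⋃ x, limitSet T x) := by
  refine mem_closure_iff.2 fun U hU hμU => ?_
  obtain ⟨x, ν, hν, hνU⟩ := nonempty_of_measure_ne_zero (hμ U hU hμU).ne'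
  exact ⟨ν, hνU, Set.mem_iUnion.2 ⟨x, hν⟩⟩

end

variable [BorelSpace X]

lemma isClosed_setOfPred_measurePreserving [HasOuterApproxClosed X] (hT : Continuous T) :
    IsClosed {μ : ProbabilityMeasure X | MeasurePreserving T (μ : Measure X) μ} := by
  have hfixed : {μ : ProbabilityMeasure X | MeasurePreserving T (μ : Measure X) μ} =
      {μ | μ.map hT.measurable.aemeasurable = μ} := by
    ext μ
    exact ⟨fun h => Subtype.ext h.map_eq, fun h => ⟨hT.measurable, congrArg Subtype.val h⟩⟩
  rw [hfixed]
  exact isClosed_eq (ProbabilityMeasure.continuous_map hT) continuous_id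

lemma IsObservable.measurePreserving [HasOuterApproxClosed X] (hT : Continuous T)
    {μ : ProbabilityMeasure X} (hμ : IsObservable Leb T μ) :
    MeasurePreserving T (μ : Measure X) μ :=
  closure_minimal (Set.iUnion_subset fun _ _ => measurePreserving_of_mem_limitSet hT)
    (isClosed_setOfPred_measurePreserving hT) hμ.mem_closure_iUnion_limitSet

lemma IsSubadditiveCocycle.exists_integral_lt_of_isObservable [CompactSpace X] [T2Space X]
    [HasOuterApproxClosed X] {a : ℕ → X → ℝ} (ha : IsSubadditiveCocycle T a) (hT : Continuous T)
    (hacont : ∀ n, Continuous (a n))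
    (hneg : ∀ μ : ProbabilityMeasure X, IsObservable Leb T μ →
      ∃ n, 0 < n ∧ ∫ x, a n x ∂(μ : Measure X) < 0) :
    ∃ L, 0 < L ∧ ∃ c, 0 < c ∧ ∀ μ : ProbabilityMeasure X, IsObservable Leb T μ →
      ∫ x, a L x ∂(μ : Measure X) < -c := by
  have hcompact : IsCompact {μ : ProbabilityMeasure X | IsObservable Leb T μ} :=
    (isClosed_setOfPred_isObservable Leb T).isCompact
  have hupper (n : ℕ) :
      UpperSemicontinuous fun μ : ProbabilityMeasure X => ∫ x, a n x ∂(μ : Measure X) :=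
    (ProbabilityMeasure.continuous_integral_continuousMap
      (⟨a n, hacont n⟩ : C(X, ℝ))).upperSemicontinuous
  obtain ⟨L, hL, hLneg⟩ := exists_pos_forall_neg_of_subadditive hcompact hupper
    (fun μ hμ => ha.subadditive_integral (IsObservable.measurePreserving hT hμ) fun n =>
      (hacont n).integrable_of_hasCompactSupport (.of_compactSpace _)) hneg
  exact ⟨L, hL,
    exists_pos_forall_lt_neg_of_isCompact hcompact ((hupper L).upperSemicontinuousOn _) hLneg⟩

end Observable

theorem negative_observable_exponents_implies_nonuniform_general
    {X : Type*} [TopologicalSpace X] [CompactSpace X] [MetrizableSpace X] [MeasurableSpace X]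
    [BorelSpace X] {T : X → X} (hT : Continuous T) {Leb : Measure X} {a : ℕ → X → ℝ}
    (hacont : ∀ n, Continuous (a n)) (ha : IsSubadditiveCocycle T a)
    (hneg : ∀ μ : ProbabilityMeasure X, IsObservable Leb T μ →
      liminf (fun n : ℕ =>
        (((n : ℝ)⁻¹ * ∫ x, a n x ∂(μ : Measure X) : ℝ) : EReal)) atTop < 0) :
    ∃ lam : ℝ, 0 < lam ∧ ∃ K : ℕ, 0 < K ∧
      ∀ᵐ x ∂Leb, limsup (fun n : ℕ =>
        ((n : ℝ) * (K : ℝ))⁻¹ * ∑ i ∈ Finset.range n, a K (T^[i * K] x)) atTop ≤ -lam := by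
  obtain ⟨L, hL, c, hc, hLc⟩ := ha.exists_integral_lt_of_isObservable hT hacont
    fun μ hμ => exists_pos_neg_of_liminf_inv_mul_neg (hneg μ hμ)
  obtain ⟨A, hA⟩ := exists_forall_norm_le_of_continuous hacont (Finset.Iic L)
  obtain ⟨K, hK, haverage⟩ := ha.exists_pos_forall_eventually_le hL
    (fun i hi => hA i (Finset.mem_Iic.2 hi)) hc
  obtain ⟨B, hB⟩ := exists_forall_norm_le_of_continuous hacont {K}
  refine ⟨c / (2 * L), by positivity, K, hK, ?_⟩
  filter_upwards [ae_limitSet_subset_setOfPred_isObservable Leb T] with x hx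
  have hbirkhoff : ∀ᶠ n in atTop, birkhoffAverage ℝ T (a L) n x < -c :=
    eventually_birkhoffAverage_lt_of_forall_mem_limitSet (hacont L) fun μ hμ => hLc μ (hx hμ)
  exact limsup_inv_mul_sum_range_le (fun i => hB K (Finset.mem_singleton_self K) _) K
    (haverage x hbirkhoff)

/-- **Theorem 6.1 ([Tia18, Proposition A]).** Let `(a_n)`, `(b_n)` be sequences of continuous
functions on the compact metric space `X` with `a_{n+k}(x) ≤ a_n(T^k x) + a_k(x)`,
`b_{n+k}(x) ≤ b_n(T^k x) + b_k(x)` and `a_n(x) ≤ a_{n+k}(x) + b_k(T^n x)` for all `x` and all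
`n, k ≥ 0`. If `lim_n (1/n) ∫ a_n dμ < 0` for every observable measure `μ`, then there are
`λ > 0` and `K ∈ ℕ` such that for `Leb`-a.e. `x`,
`limsup_n (1/(nK)) ∑_{i=0}^{n-1} a_K(T^{iK} x) ≤ -λ < 0`. -/
theorem negative_observable_exponents_implies_nonuniform
    {X : Type*} [MetricSpace X] [CompactSpace X] [MeasurableSpace X] [BorelSpace X]
    (T : X → X) (hT : Continuous T)
    (Leb : MeasureTheory.Measure X) [IsProbabilityMeasure Leb]
    (a b : ℕ → X → ℝ)
    (hacont : ∀ n, Continuous (a n)) (hbcont : ∀ n, Continuous (b n))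
    (ha : ∀ n k : ℕ, ∀ x, a (n + k) x ≤ a n (T^[k] x) + a k x)
    (hb : ∀ n k : ℕ, ∀ x, b (n + k) x ≤ b n (T^[k] x) + b k x)
    (hab : ∀ n k : ℕ, ∀ x, a n x ≤ a (n + k) x + b k (T^[n] x))
    (hneg : ∀ μ : ProbabilityMeasure X, IsObservable Leb T μ →
      liminf (fun n : ℕ =>
        (((n : ℝ)⁻¹ * ∫ x, a n x ∂(μ : Measure X) : ℝ) : EReal)) atTop < 0) :
    ∃ lam : ℝ, 0 < lam ∧ ∃ K : ℕ, 0 < K ∧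
      ∀ᵐ x ∂Leb, limsup (fun n : ℕ =>
        ((n : ℝ) * (K : ℝ))⁻¹ * ∑ i ∈ Finset.range n, a K (T^[i * K] x)) atTop ≤ -lam :=
  negative_observable_exponents_implies_nonuniform_general hT hacont ha hneg
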